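/- (Boole's V in valid arguments, single negative premiss) For any k : ℕ and any S, T₀, T : Set (Fin k → Bool), the following are equivalent: (i) for every nonempty type U and every assignment x : Fin k → Set U, if P_S(x) = ∅ and P_{T₀}(x) ≠ ∅ then P_T(x) ≠ ∅; (ii) for every nonempty type U, every assignment x : Fin k → Set U, and every set V : Set U, if P_S(x) = ∅ and V ∩ (P_{T₀}(x))ᶜ = ∅ then V ∩ (P_T(x))ᶜ = ∅. -/

import Mathlib

/-- The constituent `C_σ(x)`. -/
def constituent {U : Type*} {k : ℕ} (x : Fin k → Set U) (σ : Fin k → Bool) : Set U :=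
  ⋂ i, if σ i = true then x i else (x i)ᶜ

/-- The term function associated to a set `S` of constituent indices:
`P_S(x) = ⋃ σ ∈ S, C_σ(x)`. -/
def PSfun {U : Type*} {k : ℕ} (S : Set (Fin k → Bool)) (x : Fin k → Set U) : Set U :=
  ⋃ σ ∈ S, constituent x σ

/-!
The constituents `C_σ(x)` partition the universe, so `P_S(x)` is the preimage of `S` under the map
sending a point to the index of its constituent. On a one-point universe this index can be any
prescribed `σ`, and `P_S(x)` is then nonempty exactly when `σ ∈ S`. Hence both (i) and (ii) amount
to the combinatorial condition `T₀ \ S ⊆ T`.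
-/

theorem forall_inter_compl_eq_empty_imp_iff_subset {α : Type*} {A B : Set α} :
    (∀ V : Set α, V ∩ Aᶜ = ∅ → V ∩ Bᶜ = ∅) ↔ A ⊆ B := by
  simp only [← Set.sdiff_eq, Set.sdiff_eq_empty]
  exact forall_le_iff_le

section TermFunctions

universe u v

variable {k : ℕ} {U : Type*} {S T₀ T : Set (Fin k → Bool)} {x : Fin k → Set U}

open Classical in
/-- The index of the unique constituent of `x` containing the point `a`; it turns term functions
into preimages. -/
noncomputable def constituentIndex (x : Fin k → Set U) (a : U) : Fin k → Bool :=
  fun i => decide (a ∈ x i)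

theorem mem_constituent_iff {σ : Fin k → Bool} {a : U} :
    a ∈ constituent x σ ↔ constituentIndex x a = σ := by
  simp only [constituent, constituentIndex, Set.mem_iInter, funext_iff]
  refine forall_congr' fun i => ?_
  cases σ i <;> simp

theorem PSfun_eq_preimage (S : Set (Fin k → Bool)) (x : Fin k → Set U) :
    PSfun S x = constituentIndex x ⁻¹' S := by
  ext a
  simp [PSfun, mem_constituent_iff]

theorem PSfun_subset_PSfun_of_sdiff_subset (h : T₀ \ S ⊆ T) (hS : PSfun S x = ∅) :
    PSfun T₀ x ⊆ PSfun T x := by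
  rw [PSfun_eq_preimage] at hS
  calc PSfun T₀ x = constituentIndex x ⁻¹' (T₀ \ S) := by
        rw [PSfun_eq_preimage, Set.preimage_sdiff, hS, Set.sdiff_empty]
    _ ⊆ constituentIndex x ⁻¹' T := Set.preimage_mono h
    _ = PSfun T x := (PSfun_eq_preimage T x).symm

/-- The assignment on a one-point universe whose point lies in the constituent with index `σ`; it
serves as a countermodel when `T₀ \ S ⊆ T` fails at `σ`. -/
def pointAssignment (σ : Fin k → Bool) : Fin k → Set PUnit.{u + 1} :=
  fun i => {_a | σ i = true}

theorem constituentIndex_pointAssignment (σ : Fin k → Bool) (a : PUnit.{u + 1}) :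
    constituentIndex (pointAssignment σ) a = σ := by
  funext i
  exact Bool.decide_eq_true

theorem PSfun_pointAssignment_eq_empty_iff {σ : Fin k → Bool} :
    PSfun S (pointAssignment.{u} σ) = ∅ ↔ σ ∉ S := by
  simp [PSfun_eq_preimage, Set.eq_empty_iff_forall_notMem, constituentIndex_pointAssignment]

theorem forall_PSfun_ne_empty_iff_sdiff_subset :
    (∀ (U : Type u), Nonempty U → ∀ x : Fin k → Set U,
      PSfun S x = ∅ → PSfun T₀ x ≠ ∅ → PSfun T x ≠ ∅) ↔ T₀ \ S ⊆ T := by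
  constructor
  · rintro h σ ⟨hσT₀, hσS⟩
    simpa [PSfun_pointAssignment_eq_empty_iff, hσT₀, hσS] using
      h PUnit inferInstance (pointAssignment σ)
  · exact fun h U _ x hS => mt (Set.subset_eq_empty (PSfun_subset_PSfun_of_sdiff_subset h hS))

theorem forall_PSfun_subset_iff_sdiff_subset :
    (∀ (U : Type u), Nonempty U → ∀ x : Fin k → Set U,
      PSfun S x = ∅ → PSfun T₀ x ⊆ PSfun T x) ↔ T₀ \ S ⊆ T := by
  constructor
  · intro h
    rw [← forall_PSfun_ne_empty_iff_sdiff_subset.{u}]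
    exact fun U hU x hS => mt (Set.subset_eq_empty (h U hU x hS))
  · exact fun h U _ x => PSfun_subset_PSfun_of_sdiff_subset h

theorem boole_V_single_negative_premiss_general (S T₀ T : Set (Fin k → Bool)) :
    (∀ (U : Type u), Nonempty U → ∀ x : Fin k → Set U,
      PSfun S x = ∅ → PSfun T₀ x ≠ ∅ → PSfun T x ≠ ∅) ↔
    (∀ (U : Type v), Nonempty U → ∀ (x : Fin k → Set U) (V : Set U),
      PSfun S x = ∅ → V ∩ (PSfun T₀ x)ᶜ = ∅ → V ∩ (PSfun T x)ᶜ = ∅) := by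
  rw [forall_PSfun_ne_empty_iff_sdiff_subset, ← forall_PSfun_subset_iff_sdiff_subset]
  refine forall₃_congr fun U _ x => ?_
  rw [forall_comm, ← forall_inter_compl_eq_empty_imp_iff_subset]

end TermFunctions

theorem boole_V_single_negative_premiss (k : ℕ) (S T₀ T : Set (Fin k → Bool)) :
    (∀ (U : Type), Nonempty U → ∀ x : Fin k → Set U,
      PSfun S x = ∅ → PSfun T₀ x ≠ ∅ → PSfun T x ≠ ∅) ↔
    (∀ (U : Type), Nonempty U → ∀ (x : Fin k → Set U) (V : Set U),
      PSfun S x = ∅ → V ∩ (PSfun T₀ x)ᶜ = ∅ → V ∩ (PSfun T x)ᶜ = ∅) :=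
  boole_V_single_negative_premiss_general S T₀ T
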